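/- Let L > 0, T > 0, and let (θ, u) be a classical solution of the homogeneous linearized KdV–KdV system on [0,T] × [0,L] which in addition has continuous fourth-order spatial derivatives and continuous mixed derivatives ∂_t ∂_x θ, ∂_t ∂_x u on [0,T] × [0,L]. Then (1/2)·∫₀^T [θ_{xx}(t,L)² + u_{xx}(t,L)² − θ_{xx}(t,0)² − u_{xx}(t,0)²] dt − ∫₀^L θ_x(T,x)·u_x(T,x) dx + ∫₀^L θ_x(0,x)·u_x(0,x) dx + (1/2)·∫₀^T θ_x(t,L)² dt − (1/2)·∫₀^T u_x(t,0)² dt = 0. -/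

import Mathlib

open Set MeasureTheory

/-- Partial derivative in the first (time) variable. -/
noncomputable def pt (f : ℝ → ℝ → ℝ) : ℝ → ℝ → ℝ := fun t x => deriv (fun s => f s x) t

/-- Partial derivative in the second (space) variable. -/
noncomputable def px (f : ℝ → ℝ → ℝ) : ℝ → ℝ → ℝ := fun t x => deriv (fun y => f t y) x

/-- `(θ, u)` is a classical solution of the homogeneous linearized KdV–KdV system on
`[0,T] × [0,L]`. -/
def IsClassicalSolution (L T : ℝ) (θ u : ℝ → ℝ → ℝ) : Prop :=
  (∀ x, Differentiable ℝ fun t => θ t x) ∧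
  (∀ x, Differentiable ℝ fun t => u t x) ∧
  (∀ t, ContDiff ℝ 3 (θ t)) ∧
  (∀ t, ContDiff ℝ 3 (u t)) ∧
  ContinuousOn (fun q : ℝ × ℝ => θ q.1 q.2) (Icc 0 T ×ˢ Icc 0 L) ∧
  ContinuousOn (fun q : ℝ × ℝ => u q.1 q.2) (Icc 0 T ×ˢ Icc 0 L) ∧
  ContinuousOn (fun q : ℝ × ℝ => pt θ q.1 q.2) (Icc 0 T ×ˢ Icc 0 L) ∧
  ContinuousOn (fun q : ℝ × ℝ => pt u q.1 q.2) (Icc 0 T ×ˢ Icc 0 L) ∧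
  ContinuousOn (fun q : ℝ × ℝ => px θ q.1 q.2) (Icc 0 T ×ˢ Icc 0 L) ∧
  ContinuousOn (fun q : ℝ × ℝ => px u q.1 q.2) (Icc 0 T ×ˢ Icc 0 L) ∧
  ContinuousOn (fun q : ℝ × ℝ => px (px θ) q.1 q.2) (Icc 0 T ×ˢ Icc 0 L) ∧
  ContinuousOn (fun q : ℝ × ℝ => px (px u) q.1 q.2) (Icc 0 T ×ˢ Icc 0 L) ∧
  ContinuousOn (fun q : ℝ × ℝ => px (px (px θ)) q.1 q.2) (Icc 0 T ×ˢ Icc 0 L) ∧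
  ContinuousOn (fun q : ℝ × ℝ => px (px (px u)) q.1 q.2) (Icc 0 T ×ˢ Icc 0 L) ∧
  (∀ t ∈ Icc (0 : ℝ) T, ∀ x ∈ Icc (0 : ℝ) L,
    pt θ t x + px u t x + px (px (px u)) t x = 0) ∧
  (∀ t ∈ Icc (0 : ℝ) T, ∀ x ∈ Icc (0 : ℝ) L,
    pt u t x + px θ t x + px (px (px θ)) t x = 0) ∧
  (∀ t ∈ Icc (0 : ℝ) T, θ t 0 = 0 ∧ θ t L = 0 ∧ px θ t 0 = 0) ∧
  (∀ t ∈ Icc (0 : ℝ) T, u t 0 = 0 ∧ u t L = 0 ∧ px u t L = 0)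

/-!
Differentiating the system in `x` gives the density `θ_x u_x` a conservation law
`∂_t (θ_x u_x) = ∂_x Q` whose flux `Q` involves spatial derivatives up to order three.
Integrated over the rectangle, it leaves `Q` on the two lateral sides. The conditions `θ = 0` at
`x = 0` and `u = 0` at `x = L` may be differentiated in `t`, so the equations give `u_xxx = -u_x`
at `x = 0` and `θ_xxx = -θ_x` at `x = L`; the conditions `θ_x(t,0) = u_x(t,L) = 0` remove the
remaining third-order terms.
-/

open Filter Topology

section MixedDerivatives

variable {𝕜 E : Type*} [RCLike 𝕜] [NormedAddCommGroup E] [NormedSpace 𝕜 E]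

lemma norm_slope_sub_le {f f' : 𝕜 → E} {S : Set 𝕜} (hS : Convex ℝ S) {c : E} {ε : ℝ}
    (hf : ∀ s ∈ S, HasDerivAt f (f' s) s) (hf' : ∀ s ∈ S, ‖f' s - c‖ ≤ ε) {s t : 𝕜}
    (ht : t ∈ S) (hs : s ∈ S) (hst : s ≠ t) : ‖slope f t s - c‖ ≤ ε := by
  have hst' : s - t ≠ 0 := sub_ne_zero.2 hst
  have hmvt : ‖(f s - s • c) - (f t - t • c)‖ ≤ ε * ‖s - t‖ :=
    hS.norm_image_sub_le_of_norm_hasDerivWithin_le (f' := fun r => f' r - c)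
      (fun r hr => by
        simpa using ((hf r hr).sub ((hasDerivAt_id r).smul_const c)).hasDerivWithinAt)
      hf' ht hs
  have hslope : slope f t s - c = (s - t)⁻¹ • ((f s - s • c) - (f t - t • c)) := by
    have hsub : (f s - s • c) - (f t - t • c) = (f s - f t) - (s - t) • c := by module
    rw [hsub, smul_sub, inv_smul_smul₀ hst', slope_def_module]
  rw [hslope, norm_smul, norm_inv, inv_mul_le_iff₀ (norm_pos_iff.2 hst'), mul_comm]
  exact hmvt

lemma tendsto_slope_of_continuousAt_partialDeriv {f f' : 𝕜 → 𝕜 → E} {t x : 𝕜}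
    (hf : ∀ᶠ p in 𝓝 (t, x), HasDerivAt (fun s => f s p.2) (f' p.1 p.2) p.1)
    (hf' : ContinuousAt (fun p : 𝕜 × 𝕜 => f' p.1 p.2) (t, x)) :
    Tendsto (fun p : 𝕜 × 𝕜 => slope (fun s => f s p.2) t p.1) (𝓝[≠] t ×ˢ 𝓝 x)
      (𝓝 (f' t x)) := by
  refine Metric.tendsto_nhds.2 fun ε hε => ?_
  obtain ⟨δ, hδ, hball⟩ := Metric.eventually_nhds_iff_ball.1
    (hf.and (Metric.tendsto_nhds.1 hf' (ε / 2) (half_pos hε)))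
  have hnear : ∀ y ∈ Metric.ball x δ, ∀ s ∈ Metric.ball t δ, (s, y) ∈ Metric.ball (t, x) δ :=
    fun y hy s hs => by rw [← ball_prod_same]; exact ⟨hs, hy⟩
  have hs_near : ∀ᶠ s in 𝓝[≠] t, s ∈ Metric.ball t δ ∧ s ≠ t :=
    (eventually_nhdsWithin_of_eventually_nhds (Metric.ball_mem_nhds t hδ)).and
      eventually_mem_nhdsWithin
  filter_upwards [hs_near.prod_mk (Metric.ball_mem_nhds x hδ)] with ⟨s, y⟩ ⟨⟨hs, hst⟩, hy⟩
  rw [dist_eq_norm]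
  refine (norm_slope_sub_le (f' := fun r => f' r y) (convex_ball t δ)
    (fun r hr => (hball _ (hnear y hy r hr)).1) (fun r hr => ?_)
    (Metric.mem_ball_self hδ) hs hst).trans_lt (half_lt_self hε)
  rw [← dist_eq_norm]
  exact (hball _ (hnear y hy r hr)).2.le

/-- **Peano's theorem** on mixed partial derivatives. -/
theorem hasDerivAt_partialDeriv_swap {f ft fx fxt : 𝕜 → 𝕜 → E} {t x : 𝕜}
    (hft : ∀ᶠ y in 𝓝 x, HasDerivAt (fun s => f s y) (ft t y) t)
    (hfx : ∀ᶠ p in 𝓝 (t, x), HasDerivAt (f p.1) (fx p.1 p.2) p.2)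
    (hfxt : ∀ᶠ p in 𝓝 (t, x), HasDerivAt (fun s => fx s p.2) (fxt p.1 p.2) p.1)
    (hcont : ContinuousAt (fun p : 𝕜 × 𝕜 => fxt p.1 p.2) (t, x)) :
    HasDerivAt (ft t) (fxt t x) x := by
  -- Interchange the limits of the time slopes of `f` with differentiation in `x`.
  refine hasDerivAt_of_tendstoUniformlyOnFilter (l := 𝓝[≠] t)
    (f := fun s y => slope (fun r => f r y) t s) (f' := fun s y => slope (fun r => fx r y) t s)
    (g' := fun _ => fxt t x)
    (tendsto_prod_filter_iff.1 (tendsto_slope_of_continuousAt_partialDeriv hfxt hcont)) ?_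
    (hft.mono fun y hy => hy.tendsto_slope)
  have hfx_fst : ∀ᶠ p in 𝓝[≠] t ×ˢ 𝓝 x, HasDerivAt (f p.1) (fx p.1 p.2) p.2 :=
    (nhds_prod_eq (x := t) (y := x) ▸ hfx).filter_mono (prod_mono_left _ nhdsWithin_le_nhds)
  have hfx_base : ∀ᶠ y in 𝓝 x, HasDerivAt (f t) (fx t y) y :=
    (Continuous.prodMk_right t).continuousAt.eventually hfx
  filter_upwards [hfx_fst, hfx_base.prod_inr _] with p hp hp₀
  simp only [slope_def_module]
  exact (hp.sub hp₀).const_smul (p.1 - t)⁻¹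

end MixedDerivatives

theorem integral_sub_integral_eq_of_conservation_law {E : Type*} [NormedAddCommGroup E]
    [NormedSpace ℝ E] [CompleteSpace E] {P Q R : ℝ → ℝ → E} {a b c d : ℝ} (hab : a ≤ b)
    (hcd : c ≤ d)
    (hP : ContinuousOn (fun q : ℝ × ℝ => P q.1 q.2) (Icc a b ×ˢ Icc c d))
    (hR : ContinuousOn (fun q : ℝ × ℝ => R q.1 q.2) (Icc a b ×ˢ Icc c d))
    (hQ : ∀ t ∈ Ioo a b, ContinuousOn (Q t) (Icc c d))
    (hPR : ∀ t ∈ Ioo a b, ∀ x ∈ Ioo c d, HasDerivAt (fun s => P s x) (R t x) t)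
    (hQR : ∀ t ∈ Ioo a b, ∀ x ∈ Ioo c d, HasDerivAt (Q t) (R t x) x) :
    (∫ x in c..d, P b x) - ∫ x in c..d, P a x = ∫ t in a..b, (Q t d - Q t c) := by
  have hP_int : ∀ t ∈ Icc a b, IntervalIntegrable (P t) volume c d := fun t ht =>
    (hP.uncurry_left t ht).intervalIntegrable_of_Icc hcd
  have hR_int : IntegrableOn R.uncurry (uIoc a b ×ˢ uIoc c d) := by
    rw [uIoc_of_le hab, uIoc_of_le hcd]
    exact (hR.integrableOn_compact (isCompact_Icc.prod isCompact_Icc)).mono_set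
      (prod_mono Ioc_subset_Icc_self Ioc_subset_Icc_self)
  calc (∫ x in c..d, P b x) - ∫ x in c..d, P a x
      = ∫ x in c..d, (P b x - P a x) :=
        (intervalIntegral.integral_sub (hP_int b (right_mem_Icc.2 hab))
          (hP_int a (left_mem_Icc.2 hab))).symm
    _ = ∫ x in c..d, ∫ t in a..b, R t x := by
        refine intervalIntegral.integral_congr_Ioo_of_le hcd fun x hx => ?_
        have hx' := Ioo_subset_Icc_self hx
        exact (intervalIntegral.integral_eq_sub_of_hasDerivAt_of_le hab (hP.uncurry_right x hx')
          (fun t ht => hPR t ht x hx)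
          ((hR.uncurry_right x hx').intervalIntegrable_of_Icc hab)).symm
    _ = ∫ t in a..b, ∫ x in c..d, R t x := (intervalIntegral_intervalIntegral_swap hR_int).symm
    _ = ∫ t in a..b, (Q t d - Q t c) := by
        refine intervalIntegral.integral_congr_Ioo_of_le hab fun t ht => ?_
        exact intervalIntegral.integral_eq_sub_of_hasDerivAt_of_le hcd (hQ t ht) (hQR t ht)
          ((hR.uncurry_left t (Ioo_subset_Icc_self ht)).intervalIntegrable_of_Icc hcd)

lemma hasDerivAt_iterate_deriv {𝕜 F : Type*} [NontriviallyNormedField 𝕜] [NormedAddCommGroup F]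
    [NormedSpace 𝕜 F] {f : 𝕜 → F} {n : WithTop ℕ∞} (hf : ContDiff 𝕜 n f) {k : ℕ}
    (hk : (k : WithTop ℕ∞) < n) (x : 𝕜) : HasDerivAt (deriv^[k] f) (deriv^[k + 1] f x) x := by
  rw [Function.iterate_succ_apply', ← iteratedDeriv_eq_iterate]
  exact (hf.differentiable_iteratedDeriv k hk x).hasDerivAt

section KdV

/-- The regularity on `[0,T] × [0,L]` of one component of a solution under which the equation may
be differentiated in `x`. As in `IsClassicalSolution`, the derivatives exist everywhere and are
jointly continuous on the rectangle. -/
structure IsKdVRegular (L T : ℝ) (f : ℝ → ℝ → ℝ) : Prop where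
  contDiff : ∀ t, ContDiff ℝ 4 (f t)
  differentiable_time : ∀ x, Differentiable ℝ fun t => f t x
  differentiable_time_px : ∀ x, Differentiable ℝ fun t => px f t x
  continuousOn_pt_px : ContinuousOn (fun q : ℝ × ℝ => pt (px f) q.1 q.2) (Icc 0 T ×ˢ Icc 0 L)
  continuousOn_px : ContinuousOn (fun q : ℝ × ℝ => px f q.1 q.2) (Icc 0 T ×ˢ Icc 0 L)
  continuousOn_px_px : ContinuousOn (fun q : ℝ × ℝ => px (px f) q.1 q.2) (Icc 0 T ×ˢ Icc 0 L)

/-- The equation `f_t + g_x + g_xxx = 0` on `[0,T] × [0,L]`. The linearized KdV–KdV system is this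
equation for `(θ, u)` and for `(u, θ)`. -/
def KdVEquation (L T : ℝ) (f g : ℝ → ℝ → ℝ) : Prop :=
  ∀ t ∈ Icc (0 : ℝ) T, ∀ x ∈ Icc (0 : ℝ) L, pt f t x + px g t x + px (px (px g)) t x = 0

/-- The flux of the density `θ_x u_x`, normalized so that the conservation law reads
`∂_t (θ_x u_x) = ∂_x (gradientFlux θ u)`. -/
noncomputable def gradientFlux (θ u : ℝ → ℝ → ℝ) (t x : ℝ) : ℝ :=
  (1 / 2) * (px (px θ) t x ^ 2 + px (px u) t x ^ 2) - (1 / 2) * (px θ t x ^ 2 + px u t x ^ 2)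
    - (px (px (px u)) t x * px u t x + px (px (px θ)) t x * px θ t x)

variable {L T t x : ℝ} {f g θ u : ℝ → ℝ → ℝ}

lemma hasDerivAt_px (hf : ContDiff ℝ 1 (f t)) (x : ℝ) :
    HasDerivAt (f t) (px f t x) x :=
  hasDerivAt_iterate_deriv hf (k := 0) (by norm_num) x

lemma hasDerivAt_px_px (hf : ContDiff ℝ 2 (f t)) (x : ℝ) :
    HasDerivAt (px f t) (px (px f) t x) x :=
  hasDerivAt_iterate_deriv hf (k := 1) (by norm_num) x

lemma hasDerivAt_px_px_px (hf : ContDiff ℝ 3 (f t)) (x : ℝ) :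
    HasDerivAt (px (px f) t) (px (px (px f)) t x) x :=
  hasDerivAt_iterate_deriv hf (k := 2) (by norm_num) x

lemma hasDerivAt_px_px_px_px (hf : ContDiff ℝ 4 (f t)) (x : ℝ) :
    HasDerivAt (px (px (px f)) t) (px (px (px (px f))) t x) x :=
  hasDerivAt_iterate_deriv hf (k := 3) (by norm_num) x

namespace IsKdVRegular

lemma hasDerivAt_pt_px (hf : IsKdVRegular L T f) (t x : ℝ) :
    HasDerivAt (fun s => px f s x) (pt (px f) t x) t :=
  (hf.differentiable_time_px x t).hasDerivAt

lemma hasDerivAt_px_pt (hf : IsKdVRegular L T f) (ht : t ∈ Ioo 0 T) (hx : x ∈ Ioo 0 L) :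
    HasDerivAt (pt f t) (pt (px f) t x) x :=
  hasDerivAt_partialDeriv_swap
    (Eventually.of_forall fun y => (hf.differentiable_time y t).hasDerivAt)
    (Eventually.of_forall fun p => hasDerivAt_px ((hf.contDiff p.1).of_le (by norm_num)) p.2)
    (Eventually.of_forall fun p => hf.hasDerivAt_pt_px p.1 p.2)
    (hf.continuousOn_pt_px.continuousAt
      (prod_mem_nhds (Icc_mem_nhds ht.1 ht.2) (Icc_mem_nhds hx.1 hx.2)))

end IsKdVRegular

namespace KdVEquation

lemma pt_px_eq (h : KdVEquation L T f g) (hf : IsKdVRegular L T f) (hg : ContDiff ℝ 4 (g t))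
    (ht : t ∈ Ioo 0 T) (hx : x ∈ Ioo 0 L) :
    pt (px f) t x = -(px (px g) t x + px (px (px (px g))) t x) := by
  have hpt : pt f t =ᶠ[𝓝 x] fun y => -(px g t y + px (px (px g)) t y) := by
    filter_upwards [Icc_mem_nhds hx.1 hx.2] with y hy
    linarith [h t (Ioo_subset_Icc_self ht) y hy]
  exact (hf.hasDerivAt_px_pt ht hx).unique
    (((hasDerivAt_px_px (hg.of_le (by norm_num)) x).add
      (hasDerivAt_px_px_px_px hg x)).neg.congr_of_eventuallyEq hpt)

lemma px_px_px_eq_neg_px_of_trace_eq_zero (h : KdVEquation L T f g) (ht : t ∈ Ioo 0 T)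
    (hx : x ∈ Icc 0 L) (hf : ∀ s ∈ Icc 0 T, f s x = 0) : px (px (px g)) t x = -px g t x := by
  have htrace : (fun s => f s x) =ᶠ[𝓝 t] fun _ => 0 := by
    filter_upwards [Icc_mem_nhds ht.1 ht.2] with s hs using hf s hs
  have hpt : pt f t x = 0 := htrace.deriv_eq.trans (deriv_const t 0)
  linarith [h t (Ioo_subset_Icc_self ht) x hx]

end KdVEquation

lemma gradientFlux_sub_eq_of_boundary {a b : ℝ}
    (hua : px (px (px u)) t a = -px u t a) (hθa : px θ t a = 0)
    (hθb : px (px (px θ)) t b = -px θ t b) (hub : px u t b = 0) :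
    gradientFlux θ u t b - gradientFlux θ u t a
      = (1 / 2) * (px (px θ) t b ^ 2 + px (px u) t b ^ 2 - px (px θ) t a ^ 2
          - px (px u) t a ^ 2 + px θ t b ^ 2 - px u t a ^ 2) := by
  simp only [gradientFlux, hua, hθa, hθb, hub]
  ring

lemma hasDerivAt_gradientFlux (hθ : ContDiff ℝ 4 (θ t)) (hu : ContDiff ℝ 4 (u t)) (x : ℝ) :
    HasDerivAt (gradientFlux θ u t)
      (-(px (px u) t x + px (px (px (px u))) t x) * px u t x
        + px θ t x * -(px (px θ) t x + px (px (px (px θ))) t x)) x := by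
  have hθ₁ := hasDerivAt_px_px (hθ.of_le (by norm_num)) x
  have hθ₂ := hasDerivAt_px_px_px (hθ.of_le (by norm_num)) x
  have hθ₃ := hasDerivAt_px_px_px_px hθ x
  have hu₁ := hasDerivAt_px_px (hu.of_le (by norm_num)) x
  have hu₂ := hasDerivAt_px_px_px (hu.of_le (by norm_num)) x
  have hu₃ := hasDerivAt_px_px_px_px hu x
  refine (((((hθ₂.pow 2).add (hu₂.pow 2)).const_mul (1 / 2)).sub
    (((hθ₁.pow 2).add (hu₁.pow 2)).const_mul (1 / 2))).sub
    ((hu₃.mul hu₁).add (hθ₃.mul hθ₁))).congr_deriv ?_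
  push_cast
  ring

theorem integral_px_mul_px_sub_eq_integral_gradientFlux (hL : 0 ≤ L) (hT : 0 ≤ T)
    (hθ : IsKdVRegular L T θ) (hu : IsKdVRegular L T u)
    (eqθ : KdVEquation L T θ u) (equ : KdVEquation L T u θ) :
    (∫ x in (0 : ℝ)..L, px θ T x * px u T x) - ∫ x in (0 : ℝ)..L, px θ 0 x * px u 0 x
      = ∫ t in (0 : ℝ)..T, (gradientFlux θ u t L - gradientFlux θ u t 0) := by
  have hflux := fun t => hasDerivAt_gradientFlux (hθ.contDiff t) (hu.contDiff t)
  refine integral_sub_integral_eq_of_conservation_law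
    (P := fun t x => px θ t x * px u t x)
    (R := fun t x => pt (px θ) t x * px u t x + px θ t x * pt (px u) t x) hT hL
    (hθ.continuousOn_px.mul hu.continuousOn_px)
    ((hθ.continuousOn_pt_px.mul hu.continuousOn_px).add
      (hθ.continuousOn_px.mul hu.continuousOn_pt_px))
    (fun t _ x _ => (hflux t x).continuousAt.continuousWithinAt)
    (fun t _ x _ => (hθ.hasDerivAt_pt_px t x).mul (hu.hasDerivAt_pt_px t x))
    fun t ht x hx => ?_
  rw [eqθ.pt_px_eq hθ (hu.contDiff t) ht hx, equ.pt_px_eq hu (hθ.contDiff t) ht hx]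
  exact hflux t x

theorem statement_14_general (hL : 0 ≤ L) (hT : 0 ≤ T)
    (hθ : IsKdVRegular L T θ) (hu : IsKdVRegular L T u)
    (eqθ : KdVEquation L T θ u) (equ : KdVEquation L T u θ)
    (hθ_left : ∀ t ∈ Icc 0 T, θ t 0 = 0) (hθx_left : ∀ t ∈ Icc 0 T, px θ t 0 = 0)
    (hu_right : ∀ t ∈ Icc 0 T, u t L = 0) (hux_right : ∀ t ∈ Icc 0 T, px u t L = 0) :
    (1/2) * (∫ t in (0:ℝ)..T,
        ((px (px θ) t L)^2 + (px (px u) t L)^2 - (px (px θ) t 0)^2 - (px (px u) t 0)^2))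
      - (∫ x in (0:ℝ)..L, px θ T x * px u T x)
      + (∫ x in (0:ℝ)..L, px θ 0 x * px u 0 x)
      + (1/2) * (∫ t in (0:ℝ)..T, (px θ t L)^2)
      - (1/2) * (∫ t in (0:ℝ)..T, (px u t 0)^2) = 0 := by
  set A := fun t => px (px θ) t L ^ 2 + px (px u) t L ^ 2 - px (px θ) t 0 ^ 2
    - px (px u) t 0 ^ 2
  have h_left : (0 : ℝ) ∈ Icc 0 L := left_mem_Icc.2 hL
  have h_right : L ∈ Icc 0 L := right_mem_Icc.2 hL
  have hflux : EqOn (fun t => gradientFlux θ u t L - gradientFlux θ u t 0)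
      (fun t => (1 / 2) * (A t + px θ t L ^ 2 - px u t 0 ^ 2)) (Ioo 0 T) := fun t ht =>
    have ht' := Ioo_subset_Icc_self ht
    gradientFlux_sub_eq_of_boundary
      (eqθ.px_px_px_eq_neg_px_of_trace_eq_zero ht h_left hθ_left) (hθx_left t ht')
      (equ.px_px_px_eq_neg_px_of_trace_eq_zero ht h_right hu_right) (hux_right t ht')
  have hsq : ∀ {F : ℝ → ℝ → ℝ} {x : ℝ}, x ∈ Icc 0 L →
      ContinuousOn (fun q : ℝ × ℝ => F q.1 q.2) (Icc 0 T ×ˢ Icc 0 L) →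
      IntervalIntegrable (fun t => F t x ^ 2) volume 0 T := fun hx hF =>
    ((hF.uncurry_right _ hx).pow 2).intervalIntegrable_of_Icc hT
  have hA : IntervalIntegrable A volume 0 T :=
    (((hsq h_right hθ.continuousOn_px_px).add (hsq h_right hu.continuousOn_px_px)).sub
      (hsq h_left hθ.continuousOn_px_px)).sub (hsq h_left hu.continuousOn_px_px)
  have hcons := integral_px_mul_px_sub_eq_integral_gradientFlux hL hT hθ hu eqθ equ
  rw [intervalIntegral.integral_congr_Ioo_of_le hT hflux, intervalIntegral.integral_const_mul,
    intervalIntegral.integral_sub (hA.add (hsq h_right hθ.continuousOn_px))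
      (hsq h_left hu.continuousOn_px),
    intervalIntegral.integral_add hA (hsq h_right hθ.continuousOn_px)] at hcons
  linarith

end KdV

/-- The boundary identity for a classical solution of the homogeneous linearized KdV–KdV
system which has, in addition, continuous fourth-order spatial derivatives and continuous
mixed derivatives `∂_t ∂_x θ`, `∂_t ∂_x u` on `[0,T] × [0,L]`. -/
theorem statement_14 (L T : ℝ) (hL : 0 < L) (hT : 0 < T)
    (θ u : ℝ → ℝ → ℝ) (hsol : IsClassicalSolution L T θ u)
    (hθ4 : ∀ t, ContDiff ℝ 4 (θ t)) (hu4 : ∀ t, ContDiff ℝ 4 (u t))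
    (hθ4c : ContinuousOn (fun q : ℝ × ℝ => px (px (px (px θ))) q.1 q.2) (Icc 0 T ×ˢ Icc 0 L))
    (hu4c : ContinuousOn (fun q : ℝ × ℝ => px (px (px (px u))) q.1 q.2) (Icc 0 T ×ˢ Icc 0 L))
    (hθmix : ∀ x, Differentiable ℝ fun t => px θ t x)
    (humix : ∀ x, Differentiable ℝ fun t => px u t x)
    (hθmixc : ContinuousOn (fun q : ℝ × ℝ => pt (px θ) q.1 q.2) (Icc 0 T ×ˢ Icc 0 L))
    (humixc : ContinuousOn (fun q : ℝ × ℝ => pt (px u) q.1 q.2) (Icc 0 T ×ˢ Icc 0 L)) :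
    (1/2) * (∫ t in (0:ℝ)..T,
        ((px (px θ) t L)^2 + (px (px u) t L)^2 - (px (px θ) t 0)^2 - (px (px u) t 0)^2))
      - (∫ x in (0:ℝ)..L, px θ T x * px u T x)
      + (∫ x in (0:ℝ)..L, px θ 0 x * px u 0 x)
      + (1/2) * (∫ t in (0:ℝ)..T, (px θ t L)^2)
      - (1/2) * (∫ t in (0:ℝ)..T, (px u t 0)^2) = 0 := by
  obtain ⟨hθt, hut, -, -, -, -, -, -, hθx, hux, hθxx, huxx, -, -, eqθ, equ, bdθ, bdu⟩ := hsol
  exact statement_14_general hL.le hT.le ⟨hθ4, hθt, hθmix, hθmixc, hθx, hθxx⟩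
    ⟨hu4, hut, humix, humixc, hux, huxx⟩ eqθ equ (fun t ht => (bdθ t ht).1)
    (fun t ht => (bdθ t ht).2.2) (fun t ht => (bdu t ht).2.1) (fun t ht => (bdu t ht).2.2)
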